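/- Let a ∈ ℤ, let 1 < α < 2, let λ be a real number with -1 < λ < 0, and let 0 < σ < α - 1. Then the series ∑_{k=1}^∞ ₐ∇ₖ^{-σ} F_{α,1}(λ,k+a,a) (the sum over k ∈ ℕ_{a+1} of the σ-th nabla fractional sum of the discrete Mittag–Leffler function F_{α,1}(λ,·,a) evaluated at k) converges and equals 0. -/

import Mathlib

/-!
With respect to `n = k - a - 1`, the discrete Mittag–Leffler function has the generating series
`M = ∑ⱼ λʲ (1 - X) ^ (-(jα + β))`, a geometric series satisfying
`((1 - X) ^ α - λ) M = (1 - X) ^ (α - β)`, and the `σ`-th fractional sum multiplies generating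
series by `(1 - X) ^ (-σ)`. The sum in question is thus the value at `X = 1` of
`((1 - X) ^ α - λ)⁻¹ (1 - X) ^ s` with `s = α - β - σ > 0`.

Powers of `1 - X` with positive exponent have absolutely summable coefficients, and by Wiener's
theorem so does the inverse of `(1 - X) ^ α - λ`: for `z ≠ 1` in the closed unit disk
`|arg (1 - z)| < π / 2`, so for `α ≤ 2` the function `(1 - z) ^ α` never takes the negative value
`λ` there. Evaluation at `X = 1` is multiplicative on series with absolutely summable coefficients,
and it sends the factor `(1 - X) ^ s` to `0`.
-/

/-- The rising function `p^{q̄} = Γ(p+q)/Γ(p)`. -/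
noncomputable def rise (p : ℤ) (q : ℝ) : ℝ :=
  Real.Gamma ((p : ℝ) + q) / Real.Gamma (p : ℝ)

/-- The discrete Mittag–Leffler function
`F_{α,β}(λ,k,a) = ∑_{j=0}^∞ λ^j (k-a)^{\overline{jα+β-1}}/Γ(jα+β)`. -/
noncomputable def discML (α β lam : ℝ) (k a : ℤ) : ℝ :=
  ∑' j : ℕ, lam ^ j * rise (k - a) ((j : ℝ) * α + β - 1) / Real.Gamma ((j : ℝ) * α + β)


/-- The `σ`-th nabla fractional sum
`ₐ∇ₖ^{-σ} f(k) = ∑_{j=0}^{k-a-1} (Γ(j+σ)/(Γ(σ)Γ(j+1))) f(k-j)`. -/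
noncomputable def nsum (a : ℤ) (σ : ℝ) (f : ℤ → ℝ) (k : ℤ) : ℝ :=
  ∑ j ∈ Finset.range (k - a).toNat,
    (Real.Gamma ((j : ℝ) + σ) / (Real.Gamma σ * Real.Gamma ((j : ℝ) + 1))) * f (k - j)

open PowerSeries
open Finset.HasAntidiagonal (antidiagonal mem_antidiagonal)

section WienerAlgebra

variable (R : Type*) [NormedRing R]

/-- The Wiener algebra of power series with absolutely summable coefficients. -/
def wienerAlgebra : Subring R⟦X⟧ where
  carrier := {P | Summable fun n => ‖coeff n P‖}
  mul_mem' {P Q} hP hQ := by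
    simpa only [Set.mem_ofPred_eq, coeff_mul] using
      summable_norm_sum_mul_antidiagonal_of_summable_norm hP hQ
  one_mem' := summable_of_ne_finset_zero (s := {0}) fun n hn => by
    rw [coeff_one, if_neg (by simpa using hn), norm_zero]
  add_mem' {P Q} hP hQ := (hP.add hQ).of_nonneg_of_le (fun _ => norm_nonneg _) fun n => by
    simpa only [map_add] using norm_add_le _ _
  zero_mem' := by simp
  neg_mem' {P} hP := by simpa using hP

variable {R}

lemma mem_wienerAlgebra {P : R⟦X⟧} : P ∈ wienerAlgebra R ↔ Summable fun n => ‖coeff n P‖ :=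
  Iff.rfl

lemma C_mem_wienerAlgebra (c : R) : C c ∈ wienerAlgebra R :=
  summable_of_ne_finset_zero (s := {0}) fun n hn => by
    rw [coeff_C, if_neg (by simpa using hn), norm_zero]

lemma tsum_coeff_mul [CompleteSpace R] {P Q : R⟦X⟧} (hP : P ∈ wienerAlgebra R)
    (hQ : Q ∈ wienerAlgebra R) :
    ∑' n, coeff n (P * Q) = (∑' n, coeff n P) * ∑' n, coeff n Q := by
  simpa only [coeff_mul] using
    (tsum_mul_tsum_eq_tsum_sum_antidiagonal_of_summable_norm hP hQ).symm

/-- The truncation of the Wiener algebra norm `∑ₙ ‖coeff n P‖` to the first `N` coefficients. It is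
submultiplicative like the norm itself, but finite for every power series. -/
noncomputable def truncNorm (N : ℕ) (P : R⟦X⟧) : ℝ := ∑ n ∈ Finset.range N, ‖coeff n P‖

lemma truncNorm_nonneg (N : ℕ) (P : R⟦X⟧) : 0 ≤ truncNorm N P :=
  Finset.sum_nonneg fun _ _ => norm_nonneg _

lemma truncNorm_add_le (N : ℕ) (P Q : R⟦X⟧) :
    truncNorm N (P + Q) ≤ truncNorm N P + truncNorm N Q := by
  simpa only [truncNorm, map_add, ← Finset.sum_add_distrib] using
    Finset.sum_le_sum fun n _ => norm_add_le (coeff n P) (coeff n Q)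

lemma truncNorm_mul_le (N : ℕ) (P Q : R⟦X⟧) :
    truncNorm N (P * Q) ≤ truncNorm N P * truncNorm N Q := by
  have hcoeff (n : ℕ) :
      ‖coeff n (P * Q)‖ ≤ ∑ x ∈ antidiagonal n, ‖coeff x.1 P‖ * ‖coeff x.2 Q‖ := by
    rw [coeff_mul]
    exact norm_sum_le_of_le _ fun x _ => norm_mul_le _ _
  have hfiber {n : ℕ} (hn : n ∈ Finset.range N) :
      antidiagonal n = {x ∈ Finset.range N ×ˢ Finset.range N | x.1 + x.2 = n} := by
    ext x
    simp only [mem_antidiagonal, Finset.mem_filter, Finset.mem_product, Finset.mem_range] at hn ⊢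
    lia
  calc truncNorm N (P * Q)
      ≤ ∑ n ∈ Finset.range N, ∑ x ∈ antidiagonal n, ‖coeff x.1 P‖ * ‖coeff x.2 Q‖ :=
        Finset.sum_le_sum fun n _ => hcoeff n
    _ ≤ ∑ x ∈ Finset.range N ×ˢ Finset.range N, ‖coeff x.1 P‖ * ‖coeff x.2 Q‖ := by
        rw [Finset.sum_congr rfl fun n hn => by rw [hfiber hn]]
        exact Finset.sum_fiberwise_le_sum_of_sum_fiber_nonneg fun n _ =>
          Finset.sum_nonneg fun x _ => by positivity
    _ = truncNorm N P * truncNorm N Q := by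
        rw [Finset.sum_product, truncNorm, truncNorm, Finset.sum_mul_sum]

lemma truncNorm_pow_le [NormOneClass R] (N : ℕ) (P : R⟦X⟧) (k : ℕ) :
    truncNorm N (P ^ k) ≤ truncNorm N P ^ k := by
  induction k with
  | zero =>
    rw [pow_zero, pow_zero, truncNorm]
    calc ∑ n ∈ Finset.range N, ‖coeff n (1 : R⟦X⟧)‖
        = ∑ n ∈ Finset.range N, if n = 0 then 1 else 0 :=
          Finset.sum_congr rfl fun n _ => by rw [coeff_one]; split_ifs <;> simp
      _ ≤ 1 := by rw [Finset.sum_ite_eq']; split_ifs <;> simp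
  | succ k ih =>
    rw [pow_succ, pow_succ]
    exact (truncNorm_mul_le N _ _).trans
      (mul_le_mul_of_nonneg_right ih (truncNorm_nonneg N P))

lemma truncNorm_le_tsum {P : R⟦X⟧} (hP : P ∈ wienerAlgebra R) (N : ℕ) :
    truncNorm N P ≤ ∑' n, ‖coeff n P‖ :=
  hP.sum_le_tsum _ fun _ _ => norm_nonneg _

lemma mem_wienerAlgebra_of_truncNorm_le {P : R⟦X⟧} {c : ℝ} (h : ∀ N, truncNorm N P ≤ c) :
    P ∈ wienerAlgebra R :=
  summable_of_sum_range_le (fun _ => norm_nonneg _) h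

/-- A Neumann series argument: `Q` has norm less than `1`, so `1 - Q` is invertible. -/
lemma mem_wienerAlgebra_of_one_sub_mul_mem {P Q : R⟦X⟧} {c : ℝ} (hc : c < 1)
    (hQ : ∀ N, truncNorm N Q ≤ c) (h : (1 - Q) * P ∈ wienerAlgebra R) : P ∈ wienerAlgebra R := by
  refine mem_wienerAlgebra_of_truncNorm_le (c := (∑' n, ‖coeff n ((1 - Q) * P)‖) / (1 - c))
    fun N => ?_
  have hsplit : truncNorm N P ≤ (∑' n, ‖coeff n ((1 - Q) * P)‖) + c * truncNorm N P :=
    calc truncNorm N P = truncNorm N ((1 - Q) * P + Q * P) := by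
          rw [sub_mul, one_mul, sub_add_cancel]
      _ ≤ truncNorm N ((1 - Q) * P) + truncNorm N Q * truncNorm N P :=
        (truncNorm_add_le N _ _).trans (by gcongr; exact truncNorm_mul_le N Q P)
      _ ≤ _ := by
        gcongr
        · exact truncNorm_le_tsum h N
        · exact truncNorm_nonneg N P
        · exact hQ N
  rw [le_div_iff₀ (by linarith)]
  linarith

end WienerAlgebra

section ApproximateInverse

variable {R : Type*} [NormedCommRing R]

/-- Multiplying `E` by the partial geometric sums in `Q` improves the error of the approximate
inverse `E` of `P` from `Q` to `Q ^ k`. -/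
lemma mem_wienerAlgebra_of_approx_inverse {P P' E Q : R⟦X⟧} (hP : P * P' = 1) (hE : P * E = 1 - Q)
    (hE_mem : E ∈ wienerAlgebra R) (hQ_mem : Q ∈ wienerAlgebra R) {k : ℕ} {c : ℝ} (hc : c < 1)
    (hQ : ∀ N, truncNorm N (Q ^ k) ≤ c) : P' ∈ wienerAlgebra R := by
  have hgeom : (1 - Q ^ k) * P' = E * ∑ i ∈ Finset.range k, Q ^ i := by
    rw [← mul_neg_geom_sum, ← hE]
    linear_combination (E * ∑ i ∈ Finset.range k, Q ^ i) * hP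
  refine mem_wienerAlgebra_of_one_sub_mul_mem hc hQ (hgeom ▸ ?_)
  exact mul_mem hE_mem (sum_mem fun i _ => pow_mem hQ_mem i)

variable [NormOneClass R]

lemma truncNorm_rescale_le {P : R⟦X⟧} {M : ℝ} (hP : ∀ n, ‖coeff n P‖ ≤ M) {r : R}
    (hr : ‖r‖ < 1) (N : ℕ) : truncNorm N (rescale r P) ≤ M / (1 - ‖r‖) := by
  have hM : 0 ≤ M := (norm_nonneg _).trans (hP 0)
  calc truncNorm N (rescale r P) ≤ ∑ n ∈ Finset.range N, M * ‖r‖ ^ n := by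
        refine Finset.sum_le_sum fun n _ => ?_
        rw [coeff_rescale, mul_comm M]
        exact (norm_mul_le _ _).trans (by gcongr; exacts [norm_pow_le r n, hP n])
    _ ≤ M / (1 - ‖r‖) := by
        rw [← Finset.mul_sum, div_eq_mul_inv, ← tsum_geometric_of_lt_one (norm_nonneg r) hr]
        gcongr
        exact (summable_geometric_of_lt_one (norm_nonneg r) hr).sum_le_tsum _
          fun n _ => by positivity

lemma rescale_mem_wienerAlgebra {P : R⟦X⟧} {M : ℝ} (hP : ∀ n, ‖coeff n P‖ ≤ M) {r : R}
    (hr : ‖r‖ < 1) : rescale r P ∈ wienerAlgebra R :=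
  mem_wienerAlgebra_of_truncNorm_le (truncNorm_rescale_le hP hr)

end ApproximateInverse

/-- `P` is the Taylor series at `0` of a function equal to `φ` on the open unit disk, and converges
to it there. -/
def HasDiskExpansion (P : ℂ⟦X⟧) (φ : ℂ → ℂ) : Prop :=
  ∀ z : ℂ, ‖z‖ < 1 → HasSum (fun n => coeff n P * z ^ n) (φ z)

namespace HasDiskExpansion

variable {P Q : ℂ⟦X⟧} {φ ψ : ℂ → ℂ}

lemma const (c : ℂ) : HasDiskExpansion (C c) fun _ => c := fun z _ => by
  refine (hasSum_ite_eq 0 c).congr_fun fun n => ?_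
  rcases eq_or_ne n 0 with rfl | hn
  · simp
  · simp [coeff_C, hn]

lemma sub (hP : HasDiskExpansion P φ) (hQ : HasDiskExpansion Q ψ) :
    HasDiskExpansion (P - Q) (φ - ψ) := fun z hz => by
  simpa only [map_sub, sub_mul] using! (hP z hz).sub (hQ z hz)

lemma mul (hP : HasDiskExpansion P φ) (hQ : HasDiskExpansion Q ψ) :
    HasDiskExpansion (P * Q) (φ * ψ) := fun z hz => by
  have hPs := (hP z hz).summable.norm
  have hQs := (hQ z hz).summable.norm
  have hcoeff (n : ℕ) : coeff n (P * Q) * z ^ n =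
      ∑ x ∈ antidiagonal n, coeff x.1 P * z ^ x.1 * (coeff x.2 Q * z ^ x.2) := by
    rw [coeff_mul, Finset.sum_mul]
    refine Finset.sum_congr rfl fun x hx => ?_
    rw [← mem_antidiagonal.1 hx, pow_add]
    ring
  have hsum := (summable_norm_sum_mul_antidiagonal_of_summable_norm hPs hQs).of_norm.hasSum
  rw [← tsum_mul_tsum_eq_tsum_sum_antidiagonal_of_summable_norm hPs hQs, (hP z hz).tsum_eq,
    (hQ z hz).tsum_eq] at hsum
  exact hsum.congr_fun hcoeff

lemma pow (hP : HasDiskExpansion P φ) (k : ℕ) : HasDiskExpansion (P ^ k) (φ ^ k) := by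
  induction k with
  | zero => simpa using! const 1
  | succ k ih => simpa only [pow_succ] using ih.mul hP

lemma hasFPowerSeriesOnBall (h : HasDiskExpansion P φ) :
    HasFPowerSeriesOnBall φ (.ofScalars ℂ fun n => coeff n P) 0 1 where
  r_le := by
    refine ENNReal.le_of_forall_nnreal_lt fun r hr => ?_
    refine FormalMultilinearSeries.le_radius_of_summable _ ?_
    have hr' : ‖(r : ℂ)‖ < 1 := by simpa using hr
    refine (h r hr').summable.norm.congr fun n => ?_
    simp
  r_pos := one_pos
  hasSum {z} hz := by
    have hz' : ‖z‖ < 1 := by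
      simpa [Metric.mem_eball, edist_zero_right, ← ofReal_norm] using hz
    simpa [mul_comm] using h z hz'

lemma differentiableOn (h : HasDiskExpansion P φ) :
    DifferentiableOn ℂ φ (Metric.ball 0 1) := by
  simpa [← Metric.eball_ofReal] using! h.hasFPowerSeriesOnBall.differentiableOn

lemma coeff_eq_iteratedDeriv (h : HasDiskExpansion P φ) (n : ℕ) :
    coeff n P = iteratedDeriv n φ 0 / n.factorial := by
  have hP := h.hasFPowerSeriesOnBall.hasFPowerSeriesAt
  have heq := hP.eq_formalMultilinearSeries hP.analyticAt.hasFPowerSeriesAt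
  simpa using congrArg (fun p => FormalMultilinearSeries.coeff p n) heq

lemma constantCoeff_eq (h : HasDiskExpansion P φ) : constantCoeff P = φ 0 := by
  simpa using h.coeff_eq_iteratedDeriv 0

lemma unique (hP : HasDiskExpansion P φ) (hQ : HasDiskExpansion Q φ) : P = Q := by
  ext n
  rw [hP.coeff_eq_iteratedDeriv, hQ.coeff_eq_iteratedDeriv]

lemma exists_of_differentiableOn (hφ : DifferentiableOn ℂ φ (Metric.ball 0 1)) :
    ∃ P, HasDiskExpansion P φ := by
  refine ⟨mk fun n => iteratedDeriv n φ 0 / n.factorial, fun z hz => ?_⟩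
  refine (Complex.hasSum_taylorSeries_on_ball hφ (by simpa using hz)).congr_fun fun n => ?_
  rw [coeff_mk, sub_zero, smul_eq_mul, smul_eq_mul]
  ring

lemma inv (h : HasDiskExpansion P φ) (h0 : ∀ z, ‖z‖ < 1 → φ z ≠ 0) :
    HasDiskExpansion P⁻¹ φ⁻¹ := by
  obtain ⟨Q, hQ⟩ := exists_of_differentiableOn (φ := φ⁻¹) <|
    h.differentiableOn.inv fun z hz => h0 z (by simpa using hz)
  have hone : HasDiskExpansion (P * Q) fun _ => 1 := fun z hz => by
    simpa [mul_inv_cancel₀ (h0 z hz)] using h.mul hQ z hz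
  have hPQ : P * Q = 1 := by simpa using hone.unique (const 1)
  have hP0 : constantCoeff P ≠ 0 := h.constantCoeff_eq ▸ h0 0 (by simp)
  rwa [(PowerSeries.inv_eq_iff_mul_eq_one hP0).2 (mul_comm Q P ▸ hPQ)]

lemma norm_coeff_le (h : HasDiskExpansion P φ) {M : ℝ} (hM : ∀ z, ‖z‖ < 1 → ‖φ z‖ ≤ M) (n : ℕ) :
    ‖coeff n P‖ ≤ M := by
  have hcauchy {r : ℝ} (hr : r ∈ Set.Ioo (0 : ℝ) 1) : ‖coeff n P‖ ≤ M / r ^ n := by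
    have hdiff : DiffContOnCl ℂ φ (Metric.ball 0 r) :=
      (h.differentiableOn.mono (Metric.closedBall_subset_ball hr.2)).diffContOnCl_ball subset_rfl
    have hbound := Complex.norm_iteratedDeriv_le_of_forall_mem_sphere_norm_le n hr.1 hdiff
      fun z hz => hM z (by simpa [mem_sphere_zero_iff_norm.1 hz] using hr.2)
    rw [h.coeff_eq_iteratedDeriv, norm_div, Complex.norm_natCast, div_le_iff₀ (by positivity)]
    exact hbound.trans_eq (by ring)
  have hlim : Filter.Tendsto (fun r : ℝ => M / r ^ n) (nhdsWithin 1 (Set.Iio 1)) (nhds M) := by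
    have : ContinuousAt (fun r : ℝ => M / r ^ n) 1 := by fun_prop (disch := simp)
    simpa using this.tendsto.mono_left nhdsWithin_le_nhds
  exact ge_of_tendsto hlim <|
    Filter.mem_of_superset (Ioo_mem_nhdsLT one_pos) fun r hr => hcauchy hr

end HasDiskExpansion

section WienerInversion

variable {P : ℂ⟦X⟧}

/-- The value at `z` of the function `∑ₙ coeff n P * zⁿ`, meaningful on the closed unit disk for `P`
in the Wiener algebra (elsewhere it may be the junk value of a divergent sum). -/
noncomputable def diskEval (P : ℂ⟦X⟧) (z : ℂ) : ℂ := ∑' n, coeff n P * z ^ n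

lemma norm_coeff_mul_pow_le (P : ℂ⟦X⟧) (n : ℕ) {z : ℂ} (hz : ‖z‖ ≤ 1) :
    ‖coeff n P * z ^ n‖ ≤ ‖coeff n P‖ := by
  rw [norm_mul, norm_pow]
  exact mul_le_of_le_one_right (norm_nonneg _) (pow_le_one₀ (norm_nonneg z) hz)

lemma hasDiskExpansion_diskEval (hP : P ∈ wienerAlgebra ℂ) :
    HasDiskExpansion P (diskEval P) := fun _ hz =>
  (Summable.of_norm_bounded hP fun n => norm_coeff_mul_pow_le P n hz.le).hasSum

lemma continuousOn_diskEval (hP : P ∈ wienerAlgebra ℂ) :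
    ContinuousOn (diskEval P) (Metric.closedBall 0 1) :=
  continuousOn_tsum (fun _ => by fun_prop) hP fun n _ hz =>
    norm_coeff_mul_pow_le P n (by simpa using hz)

lemma HasDiskExpansion.diskEval_eqOn_closedBall {φ : ℂ → ℂ} (h : HasDiskExpansion P φ)
    (hP : P ∈ wienerAlgebra ℂ) (hφ : ContinuousOn φ (Metric.closedBall 0 1)) :
    Set.EqOn (diskEval P) φ (Metric.closedBall 0 1) := by
  have hopen : Set.EqOn (diskEval P) φ (Metric.ball 0 1) := fun z hz =>
    (h z (by simpa using hz)).tsum_eq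
  exact hopen.of_subset_closure (continuousOn_diskEval hP) hφ Metric.ball_subset_closedBall
    (closure_ball 0 one_ne_zero).ge

lemma exists_tsum_norm_coeff_rescale_sub_lt (hP : P ∈ wienerAlgebra ℂ) {ε : ℝ} (hε : 0 < ε) :
    ∃ r ∈ Set.Ioo (0 : ℝ) 1, ∑' n, ‖coeff n (rescale (r : ℂ) P - P)‖ < ε := by
  have hlim : Filter.Tendsto (fun r : ℝ => ∑' n, ‖coeff n (rescale (r : ℂ) P - P)‖)
      (nhdsWithin 1 (Set.Iio 1)) (nhds (∑' _ : ℕ, 0)) := by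
    refine tendsto_tsum_of_dominated_convergence (hP.add hP) (fun n => ?_) ?_
    · have hcont : Continuous fun r : ℝ => ‖coeff n (rescale (r : ℂ) P - P)‖ := by
        simp only [map_sub, coeff_rescale]
        fun_prop
      simpa using (hcont.tendsto 1).mono_left nhdsWithin_le_nhds
    · filter_upwards [Ioo_mem_nhdsLT (zero_lt_one' ℝ)] with r hr n
      rw [norm_norm, map_sub, coeff_rescale, mul_comm]
      refine (norm_sub_le _ _).trans (add_le_add_left ?_ _)
      exact norm_coeff_mul_pow_le P n (by simpa [abs_of_pos hr.1] using hr.2.le)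
  rw [tsum_zero] at hlim
  obtain ⟨r, hlt, hr⟩ := ((hlim.eventually_lt_const hε).and (Ioo_mem_nhdsLT one_pos)).exists
  exact ⟨r, hr, hlt⟩

lemma exists_pos_le_norm_diskEval (hP : P ∈ wienerAlgebra ℂ)
    (h0 : ∀ z, ‖z‖ ≤ 1 → diskEval P z ≠ 0) :
    ∃ m > 0, ∀ z, ‖z‖ ≤ 1 → m ≤ ‖diskEval P z‖ := by
  obtain ⟨z₀, hz₀, hmin⟩ := (isCompact_closedBall (0 : ℂ) 1).exists_isMinOn
    (Metric.nonempty_closedBall.2 zero_le_one) (continuousOn_diskEval hP).norm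
  exact ⟨‖diskEval P z₀‖, norm_pos_iff.2 (h0 z₀ (by simpa using hz₀)),
    fun z hz => hmin (by simpa using hz)⟩

lemma norm_coeff_inv_pow_le {m : ℝ} (hP : P ∈ wienerAlgebra ℂ) (hm : 0 < m)
    (hle : ∀ z, ‖z‖ < 1 → m ≤ ‖diskEval P z‖) (k n : ℕ) : ‖coeff n (P⁻¹ ^ k)‖ ≤ m⁻¹ ^ k := by
  have h0 (z : ℂ) (hz : ‖z‖ < 1) : diskEval P z ≠ 0 := norm_pos_iff.1 (hm.trans_le (hle z hz))
  refine (((hasDiskExpansion_diskEval hP).inv h0).pow k).norm_coeff_le (fun z hz => ?_) n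
  rw [Pi.pow_apply, Pi.inv_apply, norm_pow, norm_inv]
  gcongr
  exact hle z hz

/-- Wiener's inversion theorem on the disk. With `P_r = P(r X)`, the element `P_r⁻¹` is an
approximate inverse of `P`: the error is `q = (P_r - P) P_r⁻¹`, whose powers are geometrically
small since Cauchy's estimates bound the norm of `P_r⁻ᵏ` by `m⁻ᵏ / (1 - r)`, where `m` is the
minimum of `|P|`, and `P_r` is arbitrarily close to `P`. -/
theorem inv_mem_wienerAlgebra (hP : P ∈ wienerAlgebra ℂ)
    (h0 : ∀ z, ‖z‖ ≤ 1 → diskEval P z ≠ 0) : P⁻¹ ∈ wienerAlgebra ℂ := by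
  obtain ⟨m, hm, hmin⟩ := exists_pos_le_norm_diskEval hP h0
  obtain ⟨r, hr, hdist⟩ := exists_tsum_norm_coeff_rescale_sub_lt hP hm
  have hr1 : ‖(r : ℂ)‖ < 1 := by simpa [abs_of_pos hr.1] using hr.2
  have hPinv : P * P⁻¹ = 1 := PowerSeries.mul_inv_cancel P <| by
    rw [(hasDiskExpansion_diskEval hP).constantCoeff_eq]
    exact h0 0 (by simp)
  set D := rescale (r : ℂ) P - P with hD
  set δ := ∑' n, ‖coeff n D‖
  set E := rescale (r : ℂ) P⁻¹ with hE
  have hcoeff (k n : ℕ) : ‖coeff n (P⁻¹ ^ k)‖ ≤ m⁻¹ ^ k :=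
    norm_coeff_inv_pow_le hP hm (fun z hz => hmin z hz.le) k n
  have hD_mem : D ∈ wienerAlgebra ℂ :=
    sub_mem (rescale_mem_wienerAlgebra (fun n => hP.le_tsum n fun _ _ => norm_nonneg _) hr1) hP
  have hE_mem : E ∈ wienerAlgebra ℂ :=
    rescale_mem_wienerAlgebra (fun n => by simpa using hcoeff 1 n) hr1
  have hPE : P * E = 1 - D * E := by
    rw [hD, sub_mul, hE, ← map_mul, hPinv, map_one, sub_sub_cancel]
  have hpow (k N : ℕ) : truncNorm N ((D * E) ^ k) ≤ (δ / m) ^ k / (1 - ‖(r : ℂ)‖) :=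
    calc truncNorm N ((D * E) ^ k)
        ≤ truncNorm N D ^ k * truncNorm N (rescale (r : ℂ) (P⁻¹ ^ k)) := by
          rw [mul_pow, map_pow]
          exact (truncNorm_mul_le N _ _).trans
            (mul_le_mul_of_nonneg_right (truncNorm_pow_le N D k) (truncNorm_nonneg N _))
      _ ≤ δ ^ k * (m⁻¹ ^ k / (1 - ‖(r : ℂ)‖)) := by
          gcongr
          exacts [truncNorm_nonneg N _, truncNorm_nonneg N D, truncNorm_le_tsum hD_mem N,
            truncNorm_rescale_le (hcoeff k) hr1 N]
      _ = (δ / m) ^ k / (1 - ‖(r : ℂ)‖) := by rw [div_eq_mul_inv δ, mul_pow, mul_div_assoc]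
  obtain ⟨k, hk⟩ : ∃ k : ℕ, (δ / m) ^ k < 1 - ‖(r : ℂ)‖ :=
    exists_pow_lt_of_lt_one (sub_pos.2 hr1) ((div_lt_one hm).2 hdist)
  exact mem_wienerAlgebra_of_approx_inverse hPinv hPE hE_mem (mul_mem hD_mem hE_mem)
    ((div_lt_one (sub_pos.2 hr1)).2 hk) (hpow k)

end WienerInversion

section OneSubPow

/-- The formal power series of `(1 - X) ^ s` for a real exponent `s`. -/
noncomputable def oneSubPow (s : ℝ) : ℝ⟦X⟧ := rescale (-1) (binomialSeries ℝ s)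

lemma oneSubPow_add (s t : ℝ) : oneSubPow (s + t) = oneSubPow s * oneSubPow t := by
  simp only [oneSubPow, binomialSeries_add, map_mul]

lemma coeff_oneSubPow (s : ℝ) (n : ℕ) : coeff n (oneSubPow s) = Ring.multichoose (-s) n := by
  have hneg := Ring.choose_neg (-s) n
  rw [neg_neg, ← Ring.multichoose_eq, Units.smul_def] at hneg
  rw [oneSubPow, coeff_rescale, binomialSeries_coeff, hneg]
  simp [← mul_assoc, ← mul_pow]

lemma coeff_oneSubPow_eq_ascPochhammer (s : ℝ) (n : ℕ) :
    coeff n (oneSubPow s) = (ascPochhammer ℝ n).eval (-s) / n.factorial := by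
  rw [coeff_oneSubPow, eq_div_iff (by positivity), mul_comm, ← nsmul_eq_mul,
    Ring.factorial_nsmul_multichoose_eq_ascPochhammer, Polynomial.ascPochhammer_smeval_eq_eval]

lemma succ_mul_coeff_succ_oneSubPow (s : ℝ) (n : ℕ) :
    (n + 1) * coeff (n + 1) (oneSubPow s) = (n - s) * coeff n (oneSubPow s) := by
  rw [coeff_oneSubPow_eq_ascPochhammer, coeff_oneSubPow_eq_ascPochhammer, ascPochhammer_succ_eval,
    Nat.factorial_succ]
  push_cast
  field_simp
  ring

lemma coeff_oneSubPow_neg_eq_Gamma {s : ℝ} (hs : 0 < s) (n : ℕ) :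
    coeff n (oneSubPow (-s)) = Real.Gamma (n + s) / (Real.Gamma s * Real.Gamma (n + 1)) := by
  have hΓ := Real.Gamma_pos_of_pos hs
  induction n with
  | zero => simp [coeff_oneSubPow, hΓ.ne']
  | succ n ih =>
    have hrec := succ_mul_coeff_succ_oneSubPow (-s) n
    have hn : (0 : ℝ) < n + 1 := by positivity
    have hΓn := Real.Gamma_pos_of_pos hn
    push_cast
    rw [Real.Gamma_add_one hn.ne', add_right_comm, Real.Gamma_add_one (by positivity)]
    rw [ih] at hrec
    field_simp at hrec ⊢
    linear_combination hrec

/-- As in Raabe's test, the coefficients `cₙ` satisfy `s |cₙ| = n |cₙ| - (n + 1) |cₙ₊₁|` for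
`n ≥ s`, so their sum telescopes. -/
lemma oneSubPow_mem_wienerAlgebra {s : ℝ} (hs : 0 < s) : oneSubPow s ∈ wienerAlgebra ℝ := by
  set u : ℕ → ℝ := fun n => ‖coeff n (oneSubPow s)‖
  have htele {n : ℕ} (hn : s ≤ n) : s * u n = n * u n - (n + 1 : ℕ) * u (n + 1) := by
    have hnorm := congrArg norm (succ_mul_coeff_succ_oneSubPow s n)
    rw [norm_mul, norm_mul, Real.norm_of_nonneg (sub_nonneg.2 hn),
      Real.norm_of_nonneg (by positivity)] at hnorm
    push_cast
    linear_combination hnorm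
  obtain ⟨N, hN⟩ := exists_nat_ge s
  refine (summable_nat_add_iff (f := u) N).1 ?_
  refine (summable_mul_left_iff hs.ne').1 ?_
  refine summable_of_sum_range_le (c := N * u N) (fun n => by positivity) fun M => ?_
  calc ∑ n ∈ Finset.range M, s * u (n + N)
      = ∑ n ∈ Finset.range M, ((n + N : ℕ) * u (n + N) - (n + 1 + N : ℕ) * u (n + 1 + N)) :=
        Finset.sum_congr rfl fun n _ => by
          rw [htele (hN.trans (by simp)), add_right_comm]
    _ = N * u N - (M + N : ℕ) * u (M + N) := by
        rw [Finset.sum_range_sub' fun n => ((n + N : ℕ) : ℝ) * u (n + N), zero_add]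
    _ ≤ N * u N := sub_le_self _ (by positivity)

lemma hasDiskExpansion_oneSubPow (s : ℝ) :
    HasDiskExpansion (map Complex.ofRealHom (oneSubPow s)) fun z => (1 - z) ^ (s : ℂ) := by
  intro z hz
  have hsum := (Complex.one_div_one_sub_cpow_hasFPowerSeriesOnBall_zero (-(s : ℂ))).hasSum
    (y := z) (by simpa [Metric.mem_eball, edist_zero_right, ← ofReal_norm] using hz)
  have hcoeff (n : ℕ) :
      coeff n (map Complex.ofRealHom (oneSubPow s)) = Ring.choose (-(s : ℂ) + n - 1) n := by
    rw [coeff_map, coeff_oneSubPow, Ring.multichoose_eq]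
    simp [Complex.ofReal_choose]
  simpa [hcoeff, Complex.cpow_neg, FormalMultilinearSeries.ofScalars_apply_eq, mul_comm]
    using hsum

lemma map_ofRealHom_mem_wienerAlgebra {P : ℝ⟦X⟧} :
    map Complex.ofRealHom P ∈ wienerAlgebra ℂ ↔ P ∈ wienerAlgebra ℝ := by
  simp only [mem_wienerAlgebra, coeff_map, Complex.ofRealHom_eq_coe, Complex.norm_real]

lemma continuousOn_one_sub_cpow {s : ℝ} (hs : 0 < s) :
    ContinuousOn (fun z : ℂ => (1 - z) ^ (s : ℂ)) (Metric.closedBall 0 1) := fun z hz => by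
  have hre : 0 ≤ (1 - z).re := by
    simpa using (Complex.re_le_norm z).trans (by simpa using hz)
  exact (ContinuousAt.comp (f := fun z : ℂ => 1 - z)
    (Complex.continuousAt_cpow_const_of_re_pos (.inl hre) (by simpa using hs))
    (by fun_prop)).continuousWithinAt

lemma diskEval_oneSubPow {s : ℝ} (hs : 0 < s) {z : ℂ} (hz : ‖z‖ ≤ 1) :
    diskEval (map Complex.ofRealHom (oneSubPow s)) z = (1 - z) ^ (s : ℂ) :=
  (hasDiskExpansion_oneSubPow s).diskEval_eqOn_closedBall
    (map_ofRealHom_mem_wienerAlgebra.2 (oneSubPow_mem_wienerAlgebra hs))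
    (continuousOn_one_sub_cpow hs) (by simpa using hz)

lemma tsum_coeff_oneSubPow {s : ℝ} (hs : 0 < s) : ∑' n, coeff n (oneSubPow s) = 0 := by
  have hone := diskEval_oneSubPow hs (z := 1) norm_one.le
  rw [sub_self, Complex.zero_cpow (by exact_mod_cast hs.ne')] at hone
  simpa [diskEval, ← Complex.ofReal_tsum] using hone

lemma arg_cpow_ofReal {w : ℂ} (hw : w ≠ 0) {s : ℝ}
    (h : w.arg * s ∈ Set.Ioc (-Real.pi) Real.pi) : (w ^ (s : ℂ)).arg = w.arg * s := by
  have him : (Complex.log w * s).im = w.arg * s := by simp [Complex.log_im]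
  rw [Complex.cpow_def_of_ne_zero hw, Complex.arg_exp, him, toIocMod_eq_self]
  exact ⟨h.1, h.2.trans_eq (by ring)⟩

lemma one_sub_re_pos {z : ℂ} (hz : ‖z‖ ≤ 1) (hz1 : z ≠ 1) : 0 < (1 - z).re := by
  have hsq : z.re * z.re + z.im * z.im ≤ 1 := by
    rw [← Complex.normSq_apply, ← Complex.sq_norm]
    exact pow_le_one₀ (norm_nonneg z) hz
  contrapose! hz1
  rw [Complex.sub_re, Complex.one_re, sub_nonpos] at hz1
  have him : z.im = 0 := by nlinarith
  exact Complex.ext (by simpa using le_antisymm (by nlinarith) hz1) (by simpa using him)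

/-- Away from `z = 1`, `1 - z` lies in the open right half-plane, so
`|arg ((1 - z) ^ α)| < α π / 2 ≤ π`. -/
lemma one_sub_cpow_ne_ofReal {α lam : ℝ} (hα0 : 0 < α) (hα : α ≤ 2) (hlam : lam < 0) {z : ℂ}
    (hz : ‖z‖ ≤ 1) : (1 - z) ^ (α : ℂ) ≠ lam := by
  intro heq
  rcases eq_or_ne z 1 with rfl | hz1
  · rw [sub_self, Complex.zero_cpow (by exact_mod_cast hα0.ne')] at heq
    exact hlam.ne (by exact_mod_cast heq.symm)
  have harg : |(1 - z).arg| < Real.pi / 2 :=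
    Complex.abs_arg_lt_pi_div_two_iff.2 (.inl (one_sub_re_pos hz hz1))
  have hlt : |(1 - z).arg * α| < Real.pi := by
    rw [abs_mul, abs_of_pos hα0]
    nlinarith [abs_nonneg (1 - z).arg]
  have hpi := arg_cpow_ofReal (sub_ne_zero.2 hz1.symm) ⟨neg_lt_of_abs_lt hlt, (lt_of_abs_lt hlt).le⟩
  rw [heq, Complex.arg_ofReal_of_neg hlam] at hpi
  exact (lt_of_abs_lt hlt).ne hpi.symm

lemma map_inv_of_field {K L : Type*} [Field K] [Field L] (f : K →+* L) (P : K⟦X⟧) :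
    map f P⁻¹ = (map f P)⁻¹ := by
  have hmap : constantCoeff (map f P) = f (constantCoeff P) := by
    simp only [← coeff_zero_eq_constantCoeff_apply, coeff_map]
  rcases eq_or_ne (constantCoeff P) 0 with hP | hP
  · rw [PowerSeries.inv_eq_zero.2 hP, map_zero,
      PowerSeries.inv_eq_zero.2 (by rw [hmap, hP, map_zero])]
  · rw [PowerSeries.eq_inv_iff_mul_eq_one (by simpa [hmap] using hP), ← map_mul,
      PowerSeries.inv_mul_cancel P hP, map_one]

lemma constantCoeff_oneSubPow (s : ℝ) : constantCoeff (oneSubPow s) = 1 := by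
  rw [← coeff_zero_eq_constantCoeff_apply, coeff_oneSubPow, Ring.multichoose_zero_right]

lemma inv_oneSubPow_sub_C_mem_wienerAlgebra {α lam : ℝ} (hα0 : 0 < α) (hα : α ≤ 2)
    (hlam : lam < 0) : (oneSubPow α - C lam)⁻¹ ∈ wienerAlgebra ℝ := by
  have hmem := sub_mem (oneSubPow_mem_wienerAlgebra hα0) (C_mem_wienerAlgebra lam)
  have hexp : HasDiskExpansion (map Complex.ofRealHom (oneSubPow α - C lam))
      ((fun z => (1 - z) ^ (α : ℂ)) - fun _ => (lam : ℂ)) := by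
    simpa using (hasDiskExpansion_oneSubPow α).sub (.const lam)
  have heval := hexp.diskEval_eqOn_closedBall (map_ofRealHom_mem_wienerAlgebra.2 hmem)
    ((continuousOn_one_sub_cpow hα0).sub continuousOn_const)
  rw [← map_ofRealHom_mem_wienerAlgebra, map_inv_of_field]
  refine inv_mem_wienerAlgebra (map_ofRealHom_mem_wienerAlgebra.2 hmem) fun z hz => ?_
  rw [heval (by simpa using hz)]
  exact sub_ne_zero.2 (one_sub_cpow_ne_ofReal hα0 hα hlam hz)

end OneSubPow

section MittagLeffler

lemma summable_geometric_mul_eval {R : Type*} [NormedCommRing R] [CompleteSpace R] {r : R}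
    (hr : ‖r‖ < 1) (p : Polynomial R) : Summable fun j : ℕ => r ^ j * p.eval (j : R) := by
  simp only [Polynomial.eval_eq_sum_range, Finset.mul_sum]
  refine summable_sum fun i _ => ?_
  exact ((summable_pow_mul_geometric_of_norm_lt_one i hr).mul_left (p.coeff i)).congr
    fun j => by ring

lemma summable_pow_mul_coeff_oneSubPow (α β : ℝ) {lam : ℝ} (hlam : |lam| < 1) (n : ℕ) :
    Summable fun j : ℕ => lam ^ j * coeff n (oneSubPow (-(j * α + β))) := by
  refine (summable_geometric_mul_eval (by simpa using hlam)
    ((ascPochhammer ℝ n).comp (.C α * .X + .C β) * .C (n.factorial : ℝ)⁻¹)).congr fun j => ?_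
  rw [coeff_oneSubPow_eq_ascPochhammer]
  simp [div_eq_mul_inv, mul_comm α]

/-- The formal series `∑ⱼ λʲ (1 - X) ^ (-(jα + β))`, summed coefficientwise: the generating series
of the discrete Mittag–Leffler function `F_{α,β}(λ,·,a)`, whose value at `a + 1 + n` is the
coefficient of `Xⁿ`. -/
noncomputable def mlSeries (α β lam : ℝ) : ℝ⟦X⟧ :=
  mk fun n => ∑' j : ℕ, lam ^ j * coeff n (oneSubPow (-(j * α + β)))

lemma discML_eq_coeff_mlSeries {α β : ℝ} (hα : 0 < α) (hβ : 0 < β) (lam : ℝ) (a : ℤ) (n : ℕ) :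
    discML α β lam (a + 1 + n) a = coeff n (mlSeries α β lam) := by
  rw [mlSeries, coeff_mk, discML]
  refine tsum_congr fun j => ?_
  have hk : ((a + 1 + n - a : ℤ) : ℝ) = n + 1 := by push_cast; ring
  rw [coeff_oneSubPow_neg_eq_Gamma (by positivity), rise, hk, mul_div_assoc, div_div,
    mul_comm (Real.Gamma (n + 1))]
  congr 3
  ring

lemma nsum_eq_coeff_mul {σ : ℝ} (hσ : 0 < σ) {a : ℤ} {f : ℤ → ℝ} {P : ℝ⟦X⟧}
    (hf : ∀ n : ℕ, f (a + 1 + n) = coeff n P) (k : ℕ) :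
    nsum a σ f (a + 1 + k) = coeff k (oneSubPow (-σ) * P) := by
  have hk : (a + 1 + k - a : ℤ).toNat = k.succ := by lia
  rw [coeff_mul, Finset.Nat.sum_antidiagonal_eq_sum_range_succ fun i j =>
    coeff i (oneSubPow (-σ)) * coeff j P, nsum, hk]
  refine Finset.sum_congr rfl fun j hj => ?_
  have hjk : j ≤ k := Finset.mem_range_succ_iff.1 hj
  rw [coeff_oneSubPow_neg_eq_Gamma hσ, ← hf]
  congr 2
  push_cast [hjk]
  ring

open scoped PowerSeries.WithPiTopology in
lemma hasSum_mlSeries (α β : ℝ) {lam : ℝ} (hlam : |lam| < 1) :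
    HasSum (fun j : ℕ => C (lam ^ j) * oneSubPow (-(j * α + β))) (mlSeries α β lam) := by
  rw [PowerSeries.WithPiTopology.hasSum_iff_hasSum_coeff]
  intro n
  simpa only [coeff_C_mul, mlSeries, coeff_mk] using
    (summable_pow_mul_coeff_oneSubPow α β hlam n).hasSum

open scoped PowerSeries.WithPiTopology in
/-- `mlSeries` is a geometric series with ratio `λ (1 - X) ^ (-α)`. -/
lemma oneSubPow_sub_C_mul_mlSeries (α β : ℝ) {lam : ℝ} (hlam : |lam| < 1) :
    (oneSubPow α - C lam) * mlSeries α β lam = oneSubPow (α - β) := by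
  have hM := hasSum_mlSeries α β hlam
  have hshift := (hasSum_nat_add_iff' 1).2 (hM.mul_left (oneSubPow α))
  have hterm (j : ℕ) : oneSubPow α * (C (lam ^ (j + 1)) * oneSubPow (-((j + 1 : ℕ) * α + β))) =
      C lam * (C (lam ^ j) * oneSubPow (-(j * α + β))) := by
    have hexp : -(j * α + β) = α + -((j + 1 : ℕ) * α + β) := by push_cast; ring
    rw [hexp, oneSubPow_add, pow_succ, map_mul]
    ring
  simp only [hterm] at hshift
  have heq := hshift.unique (hM.mul_left (C lam))
  have hzero : oneSubPow α * oneSubPow (-β) = oneSubPow (α - β) := by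
    rw [← oneSubPow_add, sub_eq_add_neg]
  simp only [Finset.sum_range_one, pow_zero, map_one, one_mul, Nat.cast_zero, zero_mul, zero_add,
    hzero] at heq
  linear_combination heq

theorem hasSum_coeff_oneSubPow_mul_mlSeries {α β lam σ : ℝ} (hα0 : 0 < α) (hα : α ≤ 2)
    (hlam0 : -1 < lam) (hlam1 : lam < 0) (hσ : σ < α - β) :
    HasSum (fun k => coeff k (oneSubPow (-σ) * mlSeries α β lam)) 0 := by
  have hs : 0 < α - β - σ := sub_pos.2 hσ
  have hconst : constantCoeff (oneSubPow α - C lam) ≠ 0 := by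
    rw [map_sub, constantCoeff_oneSubPow, constantCoeff_C]
    linarith
  have hfactor : oneSubPow (-σ) * mlSeries α β lam =
      (oneSubPow α - C lam)⁻¹ * oneSubPow (α - β - σ) := by
    have hfun := oneSubPow_sub_C_mul_mlSeries α β (abs_lt.2 ⟨hlam0, hlam1.trans one_pos⟩)
    rw [sub_eq_add_neg _ σ, oneSubPow_add, ← hfun]
    linear_combination (-oneSubPow (-σ) * mlSeries α β lam) * PowerSeries.inv_mul_cancel _ hconst
  have hinv := inv_oneSubPow_sub_C_mem_wienerAlgebra hα0 hα hlam1
  have hpow := oneSubPow_mem_wienerAlgebra hs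
  have hsum : Summable fun k => coeff k (oneSubPow (-σ) * mlSeries α β lam) :=
    Summable.of_norm (hfactor ▸ mul_mem hinv hpow : _ ∈ wienerAlgebra ℝ)
  have hzero : ∑' k, coeff k (oneSubPow (-σ) * mlSeries α β lam) = 0 := by
    rw [hfactor, tsum_coeff_mul hinv hpow, tsum_coeff_oneSubPow hs, mul_zero]
  exact hzero ▸ hsum.hasSum

end MittagLeffler

theorem nabla_fracsum_discML_sum_zero_general (a : ℤ) {α β lam σ : ℝ} (hα : α ≤ 2) (hβ : 0 < β)
    (hlam0 : -1 < lam) (hlam1 : lam < 0) (hσ0 : 0 < σ) (hσ1 : σ < α - β) :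
    HasSum (fun k : ℕ => nsum a σ (fun m => discML α β lam m a) (a + 1 + k)) 0 := by
  have hα0 : 0 < α := by linarith
  exact (hasSum_coeff_oneSubPow_mul_mlSeries hα0 hα hlam0 hlam1 hσ1).congr_fun
    (nsum_eq_coeff_mul hσ0 (discML_eq_coeff_mlSeries hα0 hβ lam a))

/-- for `1 < α < 2`, `-1 < λ < 0` and `0 < σ < α - 1`, the series
`∑_{k=1}^∞ ₐ∇ₖ^{-σ} F_{α,1}(λ,k+a,a)` converges and equals `0`. -/
theorem nabla_fracsum_discML_sum_zero (a : ℤ) (α : ℝ) (hα0 : 1 < α) (hα1 : α < 2)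
    (lam : ℝ) (hlam0 : -1 < lam) (hlam1 : lam < 0)
    (σ : ℝ) (hσ0 : 0 < σ) (hσ1 : σ < α - 1) :
    Summable (fun k : ℕ => nsum a σ (fun m => discML α 1 lam m a) (a + 1 + k)) ∧
    (∑' k : ℕ, nsum a σ (fun m => discML α 1 lam m a) (a + 1 + k)) = 0 := by
  have h := nabla_fracsum_discML_sum_zero_general a hα1.le one_pos hlam0 hlam1 hσ0 hσ1
  exact ⟨h.summable, h.tsum_eq⟩
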